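/- arXiv:1911.08154 — 2 statements merged into one kernel-verified Lean document; each statement's English description precedes it below -/
import Mathlib

section
/- Let T be a tree. A vertex of T is flexible (i.e., belongs to some but not all maximum dissociation sets of T) if and only if it is an end-vertex of an α₃-critical edge of T. -/
open SimpleGraph

/-- `l` is a (not necessarily induced) `k`-path in `G`: a list of `k` pairwise distinct
vertices in which consecutive vertices are adjacent. -/
def IsKPath {V : Type*} (G : SimpleGraph V) (k : ℕ) (l : List V) : Prop :=
  l.length = k ∧ l.Nodup ∧ l.Chain' G.Adj

/-- A `k`-matching in `G`: a finite set of pairwise vertex-disjoint `k`-paths. -/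
def IsKMatching {V : Type*} (G : SimpleGraph V) (k : ℕ) (M : Finset (List V)) : Prop :=
  (∀ l ∈ M, IsKPath G k l) ∧
    (M : Set (List V)).Pairwise fun l₁ l₂ => ∀ v ∈ l₁, v ∉ l₂

/-- The `k`-matching number `μ_k(G)`: the maximum cardinality of a `k`-matching. -/
noncomputable def kMatchNum {V : Type*} (G : SimpleGraph V) (k : ℕ) : ℕ :=
  sSup {n | ∃ M : Finset (List V), IsKMatching G k M ∧ M.card = n}

/-- A maximum `k`-matching: a `k`-matching of cardinality `μ_k(G)`. -/
def IsMaxKMatching {V : Type*} (G : SimpleGraph V) (k : ℕ) (M : Finset (List V)) : Prop :=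
  IsKMatching G k M ∧ M.card = kMatchNum G k

/-- A `k`-independent set: a set of vertices whose induced subgraph contains no `k`-path. -/
def IsKIndepSet {V : Type*} (G : SimpleGraph V) (k : ℕ) (S : Finset V) : Prop :=
  ∀ l : List V, IsKPath G k l → ¬ (∀ v ∈ l, v ∈ S)

/-- The `k`-independence number `α_k(G)`. -/
noncomputable def kIndepNum {V : Type*} (G : SimpleGraph V) (k : ℕ) : ℕ :=
  sSup {n | ∃ S : Finset V, IsKIndepSet G k S ∧ S.card = n}

/-- A `k`-vertex cover: a set of vertices meeting every `k`-path of `G`. -/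
def IsKCover {V : Type*} (G : SimpleGraph V) (k : ℕ) (C : Finset V) : Prop :=
  ∀ l : List V, IsKPath G k l → ∃ v ∈ l, v ∈ C

/-- The `k`-vertex cover number `τ_k(G)`. -/
noncomputable def kCoverNum {V : Type*} (G : SimpleGraph V) (k : ℕ) : ℕ :=
  sInf {n | ∃ C : Finset V, IsKCover G k C ∧ C.card = n}

/-- A dissociation set: a set of vertices inducing a subgraph of maximum degree at most 1,
i.e. every vertex of `S` has at most one neighbour inside `S`. -/
def IsDissocSet {V : Type*} (G : SimpleGraph V) (S : Finset V) : Prop :=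
  ∀ v ∈ S, ∀ u ∈ S, ∀ w ∈ S, G.Adj v u → G.Adj v w → u = w

/-- The dissociation number `α₃(G)`. -/
noncomputable def dissNum {V : Type*} (G : SimpleGraph V) : ℕ :=
  sSup {n | ∃ S : Finset V, IsDissocSet G S ∧ S.card = n}

/-- A maximum dissociation set: a dissociation set of cardinality `α₃(G)`. -/
def IsMaxDissocSet {V : Type*} (G : SimpleGraph V) (S : Finset V) : Prop :=
  IsDissocSet G S ∧ S.card = dissNum G

/-- `uv` is an `α₃`-critical edge of `G`: deleting it increases the dissociation number. -/
def IsAlpha3Critical {V : Type*} (G : SimpleGraph V) (u v : V) : Prop :=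
  G.Adj u v ∧ dissNum G < dissNum (G.deleteEdges {s(u, v)})

/-- `uv` is a `μ₃`-critical edge of `G`: deleting it decreases the `3`-matching number. -/
def IsMu3Critical {V : Type*} (G : SimpleGraph V) (u v : V) : Prop :=
  G.Adj u v ∧ kMatchNum (G.deleteEdges {s(u, v)}) 3 < kMatchNum G 3

/-- An insulated `α₃`-critical edge: an `α₃`-critical edge sharing no end-vertex with any
other `α₃`-critical edge. -/
def IsInsulated {V : Type*} (G : SimpleGraph V) (u v : V) : Prop :=
  IsAlpha3Critical G u v ∧
    ∀ x y : V, IsAlpha3Critical G x y → s(x, y) ≠ s(u, v) →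
      x ≠ u ∧ x ≠ v ∧ y ≠ u ∧ y ≠ v

/-- A flexible vertex: one lying in some but not all maximum dissociation sets. -/
def IsFlexible {V : Type*} (G : SimpleGraph V) (v : V) : Prop :=
  (∃ S : Finset V, IsMaxDissocSet G S ∧ v ∈ S) ∧
    (∃ S : Finset V, IsMaxDissocSet G S ∧ v ∉ S)

/-- The set of static-included vertices: vertices lying in every maximum dissociation set. -/
def staticIncluded {V : Type*} (G : SimpleGraph V) : Set V :=
  {v | ∀ S : Finset V, IsMaxDissocSet G S → v ∈ S}

/-- The set of static-excluded vertices: vertices lying in no maximum dissociation set. -/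
def staticExcluded {V : Type*} (G : SimpleGraph V) : Set V :=
  {v | ∀ S : Finset V, IsMaxDissocSet G S → v ∉ S}

/-- The (unordered) edge `uv` occurs as an edge of the path recorded by the list `l`. -/
def EdgeInList {V : Type*} (l : List V) (u v : V) : Prop :=
  ∃ p ∈ l.zip l.tail, p = (u, v) ∨ p = (v, u)


theorem dn_le {V : Type*} [Fintype V] (G : SimpleGraph V) (S : Finset V)
    (h : IsDissocSet G S) : S.card ≤ dissNum G := by
  apply le_csSup
  · refine ⟨Fintype.card V, ?_⟩
    rintro n ⟨S, -, rfl⟩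
    exact Finset.card_le_univ S
  · exact ⟨S, h, rfl⟩

theorem dn_exists {V : Type*} [Fintype V] (G : SimpleGraph V) :
    ∃ S : Finset V, IsDissocSet G S ∧ S.card = dissNum G := by
  have : dissNum G ∈ {n | ∃ S : Finset V, IsDissocSet G S ∧ S.card = n} := by
    apply Nat.sSup_mem
    · exact ⟨0, ∅, by simp [IsDissocSet], rfl⟩
    · refine ⟨Fintype.card V, ?_⟩
      rintro n ⟨S, -, rfl⟩
      exact Finset.card_le_univ S
  exact this

theorem dissoc_of_missing {V : Type*} (G : SimpleGraph V) (a b : V) (S : Finset V)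
    (h : IsDissocSet (G.deleteEdges {s(a, b)}) S) (hab : a ∉ S ∨ b ∉ S) : IsDissocSet G S := by
  have key : ∀ x ∈ S, ∀ y ∈ S, G.Adj x y → (G.deleteEdges {s(a, b)}).Adj x y := by
    intro x hx y hy hxy
    rw [deleteEdges_adj]
    refine ⟨hxy, ?_⟩
    simp only [Set.mem_singleton_iff, Sym2.eq_iff]
    rintro (⟨rfl, rfl⟩ | ⟨rfl, rfl⟩) <;> tauto
  intro x hx y hy z hz h1 h2
  exact h x hx y hy z hz (key x hx y hy h1) (key x hx z hz h2)

theorem dissoc_subset {V : Type*} (G : SimpleGraph V) (S S' : Finset V) (hs : S' ⊆ S)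
    (h : IsDissocSet G S) : IsDissocSet G S' :=
  fun x hx y hy z hz => h x (hs hx) y (hs hy) z (hs hz)

/-- The graph with all edges at `v` removed. -/
def cutAt {V : Type*} (T : SimpleGraph V) (v : V) : SimpleGraph V where
  Adj a b := T.Adj a b ∧ a ≠ v ∧ b ≠ v
  symm := ⟨fun _ _ h => ⟨h.1.symm, h.2.2, h.2.1⟩⟩
  loopless := ⟨fun _ h => h.1.ne rfl⟩

theorem cutAt_reach {V : Type*} (T : SimpleGraph V) (v x : V)
    (h : (cutAt T v).Reachable v x) : x = v := by
  obtain ⟨p⟩ := h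
  cases p with
  | nil => rfl
  | cons h _ => exact absurd rfl h.2.1

theorem forward {V : Type*} [Fintype V] [DecidableEq V]
    (T : SimpleGraph V) (hT : T.IsTree) (v : V) (h : IsFlexible T v) :
    ∃ u : V, IsAlpha3Critical T v u := by
  classical
  obtain ⟨⟨S1, ⟨d1, c1⟩, v1⟩, ⟨S0, ⟨d0, c0⟩, v0⟩⟩ := h
  set f := (cutAt T v).connectedComponentMk with hf
  have ex : ∃ C, (S1.filter (f · = C)).card < (S0.filter (f · = C)).card := by
    by_contra! hc
    have e1 : S1.card = ∑ C, (S1.filter (f · = C)).card :=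
      Finset.card_eq_sum_card_fiberwise (by simp [Set.MapsTo])
    have e0 : S0.card = ∑ C, (S0.filter (f · = C)).card :=
      Finset.card_eq_sum_card_fiberwise (by simp [Set.MapsTo])
    have : ∑ C, (S0.filter (f · = C)).card < ∑ C, (S1.filter (f · = C)).card := by
      apply Finset.sum_lt_sum (fun C _ => hc C)
      refine ⟨f v, Finset.mem_univ _, ?_⟩
      have z : S0.filter (f · = f v) = ∅ := by
        apply Finset.filter_eq_empty_iff.2
        intro x hx hxv
        have := cutAt_reach T v x (ConnectedComponent.exact hxv).symm
        exact v0 (this ▸ hx)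
      rw [z, Finset.card_empty]
      exact Finset.card_pos.2 ⟨v, by simp [v1]⟩
    omega
  obtain ⟨C, hC⟩ := ex
  have hvC : f v ≠ C := by
    rintro rfl
    obtain ⟨x, hx⟩ := Finset.card_pos.1 (lt_of_le_of_lt (Nat.zero_le _) hC)
    rw [Finset.mem_filter] at hx
    have := cutAt_reach T v x (ConnectedComponent.exact hx.2).symm
    exact v0 (this ▸ hx.1)
  set S := S1.filter (fun x => ¬ f x = C) ∪ S0.filter (f · = C) with hS
  have cS : dissNum T < S.card := by
    rw [hS, Finset.card_union_of_disjoint]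
    · have := Finset.card_filter_add_card_filter_not (s := S1) (fun x => f x = C)
      omega
    · rw [Finset.disjoint_left]
      intro x hx hx'
      simp only [Finset.mem_filter] at hx hx'
      exact hx.2 hx'.2
  have cross : ∀ x y, T.Adj x y → f x = C → f y ≠ C → y = v := by
    intro x y hxy hx hy
    by_contra hyv
    have hxv : x ≠ v := by rintro rfl; exact hvC hx
    apply hy
    rw [← hx]
    have : (cutAt T v).Adj y x := ⟨hxy.symm, hyv, hxv⟩
    exact ConnectedComponent.sound this.reachable
  have uniq : ∀ u w, T.Adj v u → T.Adj v w → f u = C → f w = C → w = u := by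
    intro u w hu hw hfu hfw
    by_contra hne
    have hb := (isAcyclic_iff_forall_adj_isBridge.1 hT.IsAcyclic) hu
    rw [isBridge_iff] at hb
    apply hb
    have hr : (cutAt T v).Reachable w u := ConnectedComponent.exact (hfw.trans hfu.symm)
    have hle : cutAt T v ≤ T.deleteEdges {s(v, u)} := by
      intro a b hab
      rw [deleteEdges_adj]
      refine ⟨hab.1, ?_⟩
      simp only [Set.mem_singleton_iff, Sym2.eq_iff]
      rintro (⟨rfl, rfl⟩ | ⟨rfl, rfl⟩)
      · exact hab.2.1 rfl
      · exact hab.2.2 rfl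
    have ha : (T.deleteEdges {s(v, u)}).Adj v w := by
      rw [deleteEdges_adj]
      refine ⟨hw, ?_⟩
      simp only [Set.mem_singleton_iff, Sym2.eq_iff]
      rintro (⟨_, rfl⟩ | ⟨rfl, rfl⟩)
      · exact hne rfl
      · exact hne rfl
    exact ha.reachable.trans (hr.mono hle)
  have gen : ∀ G : SimpleGraph V, G ≤ T → (∀ w, f w = C → ¬ G.Adj v w) → IsDissocSet G S := by
    intro G hG hno
    have side : ∀ x y, G.Adj x y → (f x = C ↔ f y = C) := by
      intro x y hxy
      constructor
      · intro hx
        by_contra hy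
        have := cross x y (hG hxy) hx hy
        subst this
        exact hno x hx hxy.symm
      · intro hy
        by_contra hx
        have := cross y x (hG hxy).symm hy hx
        subst this
        exact hno y hy hxy
    intro x hx y hy z hz hxy hxz
    have s1 := side x y hxy
    have s2 := side x z hxz
    simp only [hS, Finset.mem_union, Finset.mem_filter] at hx hy hz
    by_cases hxC : f x = C
    · exact d0 x (by tauto) y (by tauto) z (by tauto) (hG hxy) (hG hxz)
    · exact d1 x (by tauto) y (by tauto) z (by tauto) (hG hxy) (hG hxz)
  by_cases hu : ∃ u, T.Adj v u ∧ f u = C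
  · obtain ⟨u, hu, hfu⟩ := hu
    refine ⟨u, hu, lt_of_lt_of_le cS (dn_le _ _ (gen _ (deleteEdges_le _) ?_))⟩
    intro w hw hvw
    rw [deleteEdges_adj] at hvw
    have := uniq u w hu hvw.1 hfu hw
    subst this
    exact hvw.2 rfl
  · exfalso
    have := dn_le T S (gen T le_rfl (fun w hw hvw => hu ⟨w, hvw, hw⟩))
    omega

/-- A vertex of a tree is flexible (in some but not all maximum dissociation sets) iff
it is an end-vertex of an `α₃`-critical edge. -/
theorem tree_flexible_iff_endvertex_alpha3Critical {V : Type*} [Fintype V] [DecidableEq V]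
    (T : SimpleGraph V) (hT : T.IsTree) (v : V) :
    IsFlexible T v ↔ ∃ u : V, IsAlpha3Critical T v u := by
  refine ⟨forward T hT v, ?_⟩
  rintro ⟨u, hvu, hlt⟩
  obtain ⟨S, dS, cS⟩ := dn_exists (T.deleteEdges {s(v, u)})
  have both : v ∈ S ∧ u ∈ S := by
    by_contra hcon
    have := dn_le T S (dissoc_of_missing T v u S dS (by tauto))
    omega
  have ev : ∀ x ∈ S, (x = v ∨ x = u) → IsMaxDissocSet T (S.erase x) := by
    intro x hx hxx
    have hd : IsDissocSet T (S.erase x) := by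
      apply dissoc_of_missing T v u _ (dissoc_subset _ _ _ (Finset.erase_subset _ _) dS)
      rcases hxx with rfl | rfl
      · left; simp
      · right; simp
    refine ⟨hd, ?_⟩
    have h1 := dn_le T _ hd
    have h2 := Finset.card_erase_add_one hx
    omega
  exact ⟨⟨S.erase u, ev u both.2 (Or.inr rfl), by simp [both.1, hvu.ne]⟩,
    ⟨S.erase v, ev v both.1 (Or.inl rfl), by simp⟩⟩
end

section
/- Let T be a tree and let 𝒜_T denote the set of static-included vertices of T. Then no vertex of any critical 3-path of T (a 3-path both of whose edges are α₃-critical in T) is adjacent to a vertex of 𝒜_T. -/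
open SimpleGraph

section aux
variable {V : Type*} [Fintype V] [DecidableEq V]

theorem aux_bdd (G : SimpleGraph V) :
    BddAbove {n | ∃ S : Finset V, IsDissocSet G S ∧ S.card = n} :=
  ⟨Fintype.card V, by rintro n ⟨S, -, rfl⟩; exact Finset.card_le_univ S⟩

theorem aux_le (G : SimpleGraph V) (S : Finset V) (h : IsDissocSet G S) :
    S.card ≤ dissNum G := le_csSup (aux_bdd G) ⟨S, h, rfl⟩

theorem aux_exists (G : SimpleGraph V) : ∃ S, IsDissocSet G S ∧ S.card = dissNum G :=
  Nat.sSup_mem (s := {n | ∃ S : Finset V, IsDissocSet G S ∧ S.card = n})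
    ⟨0, ∅, by simp [IsDissocSet], rfl⟩ (aux_bdd G)

/-- A witness of criticality. -/
def Wit (G : SimpleGraph V) (u v : V) (S : Finset V) : Prop :=
  G.Adj u v ∧ IsDissocSet (G.deleteEdges {s(u, v)}) S ∧ u ∈ S ∧ v ∈ S ∧
    IsMaxDissocSet G (S.erase u) ∧ IsMaxDissocSet G (S.erase v) ∧ S.card = dissNum G + 1

theorem wit_symm {G : SimpleGraph V} {u v : V} {S : Finset V} (h : Wit G u v S) :
    Wit G v u S := by
  obtain ⟨h1, h2, h3, h4, h5, h6, h7⟩ := h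
  exact ⟨h1.symm, by rwa [Sym2.eq_swap], h4, h3, h6, h5, h7⟩

theorem dissoc_of_del {G : SimpleGraph V} {u v : V} {S S' : Finset V}
    (h : IsDissocSet (G.deleteEdges {s(u, v)}) S) (hs : S' ⊆ S) (hu : u ∉ S' ∨ v ∉ S') :
    IsDissocSet G S' := by
  intro x hx y hy z hz hxy hxz
  refine h x (hs hx) y (hs hy) z (hs hz) ?_ ?_ <;>
  · simp only [deleteEdges_adj, Set.mem_singleton_iff, Sym2.eq_iff]
    refine ⟨by assumption, ?_⟩
    rintro (⟨rfl, rfl⟩ | ⟨rfl, rfl⟩) <;> tauto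

theorem exists_wit {G : SimpleGraph V} {u v : V} (h : IsAlpha3Critical G u v) :
    ∃ S, Wit G u v S := by
  obtain ⟨hadj, hlt⟩ := h
  obtain ⟨S, hS, hc⟩ := aux_exists (G.deleteEdges {s(u, v)})
  have hu : u ∈ S := by
    by_contra hu
    have := aux_le G S (dissoc_of_del hS subset_rfl (Or.inl hu))
    omega
  have hv : v ∈ S := by
    by_contra hv
    have := aux_le G S (dissoc_of_del hS subset_rfl (Or.inr hv))
    omega
  have h1 : IsDissocSet G (S.erase u) :=
    dissoc_of_del hS (Finset.erase_subset _ _) (Or.inl (by simp))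
  have h2 : IsDissocSet G (S.erase v) :=
    dissoc_of_del hS (Finset.erase_subset _ _) (Or.inr (by simp))
  have h3 := aux_le G _ h1
  have h4 := Finset.card_erase_add_one hu
  have h5 := Finset.card_erase_add_one hv
  exact ⟨S, hadj, hS, hu, hv, ⟨h1, by omega⟩, ⟨h2, by omega⟩, by omega⟩

theorem exists_side {T : SimpleGraph V} (hT : T.IsTree) {b c : V} (h : T.Adj b c) :
    ∃ C : Finset V, c ∈ C ∧ b ∉ C ∧ ∀ x y, T.Adj x y → x ∈ C → y ∉ C → x = c ∧ y = b := by
  classical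
  have hb := isAcyclic_iff_forall_adj_isBridge.1 hT.isAcyclic h
  rw [isBridge_iff] at hb
  refine ⟨Finset.univ.filter fun v => (T.deleteEdges {s(b, c)}).Reachable c v, ?_, ?_, ?_⟩
  · simp
  · simp only [Finset.mem_filter, Finset.mem_univ, true_and]
    intro hr
    have := hr.symm
    simp_all
  · simp only [Finset.mem_filter, Finset.mem_univ, true_and]
    intro x y hxy hx hy
    by_cases he : s(x, y) = s(b, c)
    · rw [Sym2.eq_iff] at he
      rcases he with ⟨rfl, rfl⟩ | he
      · exact absurd .rfl hy
      · exact he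
    · refine absurd (hx.trans (Adj.reachable ?_)) hy
      simp [deleteEdges_adj, hxy, he]

/-- Gluing two dissociation sets along a cut with no crossing edges. -/
theorem glue {T : SimpleGraph V} {b c : V} {C P Q : Finset V}
    (hC : ∀ x y, T.Adj x y → x ∈ C → y ∉ C → x = c ∧ y = b)
    (hP : IsDissocSet T (P \ C)) (hQ : IsDissocSet T (Q ∩ C))
    (hbc : b ∉ P \ C ∨ c ∉ Q ∩ C) : IsDissocSet T ((P \ C) ∪ (Q ∩ C)) := by
  have key : ∀ x ∈ (P \ C) ∪ (Q ∩ C), ∀ y ∈ (P \ C) ∪ (Q ∩ C), T.Adj x y →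
      (x ∈ P \ C ∧ y ∈ P \ C) ∨ (x ∈ Q ∩ C ∧ y ∈ Q ∩ C) := by
    intro x hx y hy hxy
    have h1 := hC x y hxy
    have h2 := hC y x hxy.symm
    grind
  intro x hx y hy z hz hxy hxz
  rcases key x hx y hy hxy with h | h <;> rcases key x hx z hz hxz with h' | h'
  · exact hP x h.1 y h.2 z h'.2 hxy hxz
  · grind
  · grind
  · exact hQ x h.1 y h.2 z h'.2 hxy hxz

theorem key_mem {T : SimpleGraph V} (hT : T.IsTree) {a b c : V} {S S' : Finset V}
    (h : Wit T a b S) (h' : Wit T b c S') : c ∈ S := by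
  by_contra hc
  obtain ⟨C, hcC, hbC, hC⟩ := exists_side hT h'.1
  have hX : IsDissocSet T ((S.erase b \ C) ∪ (S' ∩ C)) := by
    apply glue hC
    · exact dissoc_of_del h.2.1 (by grind) (Or.inr (by grind))
    · exact dissoc_of_del h'.2.1 (by grind) (Or.inl (by grind))
    · left; grind
  have hY : IsDissocSet T ((S' \ C) ∪ (S ∩ C)) := by
    apply glue hC
    · exact dissoc_of_del h'.2.1 (by grind) (Or.inr (by grind))
    · exact dissoc_of_del h.2.1 (by grind) (Or.inr (by grind))
    · right; grind
  have h1 := aux_le T _ hX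
  have h2 := aux_le T _ hY
  have d : ∀ P Q : Finset V, Disjoint (P \ C) (Q ∩ C) := fun P Q => by
    rw [Finset.disjoint_left]; grind
  rw [Finset.card_union_of_disjoint (d _ _)] at h1 h2
  have e1 := Finset.card_sdiff_add_card_inter (S.erase b) C
  have e2 := Finset.card_sdiff_add_card_inter S' C
  have e3 : S.erase b ∩ C = S ∩ C := by grind
  rw [e3] at e1
  have e4 := Finset.card_erase_add_one h.2.2.2.1
  have e5 := h.2.2.2.2.2.2
  have e6 := h'.2.2.2.2.2.2
  omega

/-- An end-vertex of a critical path has no static-included neighbour. -/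
theorem end_case {T : SimpleGraph V} (hT : T.IsTree) {a b c w : V} {S S' : Finset V}
    (h : Wit T a b S) (h' : Wit T b c S') (hac : a ≠ c) (hw : w ∈ staticIncluded T) :
    ¬ T.Adj a w := by
  intro haw
  have ha : a ∈ S' := key_mem hT (wit_symm h') (wit_symm h)
  have hw1 := hw _ h'.2.2.2.2.1
  have hw2 := hw _ h'.2.2.2.2.2.1
  have hab := h.1.ne
  refine absurd (h'.2.1 a ha b h'.2.2.1 w (Finset.mem_of_mem_erase hw1) ?_ ?_) ?_
  · simp [deleteEdges_adj, h.1, hac, hab]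
  · simp [deleteEdges_adj, haw, hac, hab]
  · rintro rfl; simp at hw1

end aux

/-- No vertex of any critical `3`-path of a tree `T` is adjacent to a vertex of `𝒜_T`
(the set of static-included vertices). -/
theorem tree_critical_threePath_not_adj_staticIncluded {V : Type*} [Fintype V]
    [DecidableEq V] (T : SimpleGraph V) (hT : T.IsTree) :
    ∀ a b c : V, IsKPath T 3 [a, b, c] →
      IsAlpha3Critical T a b → IsAlpha3Critical T b c →
        ∀ x ∈ ({a, b, c} : Set V), ∀ w ∈ staticIncluded T, ¬ T.Adj x w := by
  intro a b c hp hab hbc x hx w hw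
  have hac : a ≠ c := by
    have := hp.2.1
    simp at this
    tauto
  obtain ⟨S, h⟩ := exists_wit hab
  obtain ⟨S', h'⟩ := exists_wit hbc
  rcases hx with rfl | rfl | rfl
  · exact end_case hT h h' hac hw
  · intro hxw
    have hc : c ∈ S := key_mem hT h h'
    have hw1 := hw _ h.2.2.2.2.1
    have hw2 := hw _ h'.2.2.2.2.2.1
    have hwa : w ≠ a := by rintro rfl; simp at hw1
    have hwc : w ≠ c := by rintro rfl; simp at hw2
    refine hwc (h.2.1 x h.2.2.2.1 w (Finset.mem_of_mem_erase hw1) c hc ?_ ?_)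
    · simp [deleteEdges_adj, hxw, hwa, h.1.ne']
    · simp [deleteEdges_adj, h'.1, hac.symm, h.1.ne']
  · exact end_case hT (wit_symm h') (wit_symm h) hac.symm hw
end
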